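/- Let d ≥ 1 and ε > 0, and let ν be a probability measure on ℤ^d satisfying the balance equation with parameter ε. Then 1 = ν_0 + ν_0 Σ_{k=1}^∞ (1 + ε ν_0)^{−k} · ℙ_0(τ_0 ≥ k+1), where τ_0 is the first return time to 0 of the simple random walk started at 0. -/

import Mathlib

open Finset

namespace CBRW

/-- The `i`-th canonical basis vector of `ℤ^d`. -/
def e (d : ℕ) (i : Fin d) : Fin d → ℤ := Pi.single i 1

/-- The step of the simple random walk corresponding to the direction `(i, b)`:
`+e_i` if `b = true`, `-e_i` if `b = false`. -/
def dir (d : ℕ) (s : Fin d × Bool) : Fin d → ℤ := if s.2 then e d s.1 else -(e d s.1)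

/-- The position at time `j` of the simple random walk started at `x` and driven by the
word of increments `w` (of length `k`); only the first `j` letters of `w` are used. -/
def posAt (d : ℕ) {k : ℕ} (x : Fin d → ℤ) (w : Fin k → Fin d × Bool) (j : ℕ) :
    Fin d → ℤ :=
  x + ∑ i : Fin k, if (i : ℕ) < j then dir d (w i) else 0

open Classical in
/-- `ℙ_x(τ_y = k)`: the probability that the simple random walk on `ℤ^d` started at `x`
first visits `y` at time `k` (meaningful for `k ≥ 1`). -/
noncomputable def firstHitProb (d : ℕ) (x y : Fin d → ℤ) (k : ℕ) : ℝ :=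
  ((Finset.univ.filter (fun w : Fin k → Fin d × Bool =>
      (∀ j, 1 ≤ j → j < k → posAt d x w j ≠ y) ∧ posAt d x w k = y)).card : ℝ) /
    (2 * (d : ℝ)) ^ k

open Classical in
/-- `ℙ_x(τ_y ≥ k + 1)`: the probability that the simple random walk on `ℤ^d` started at `x`
avoids `y` at all times `1, …, k`. -/
noncomputable def avoidProb (d : ℕ) (x y : Fin d → ℤ) (k : ℕ) : ℝ :=
  ((Finset.univ.filter (fun w : Fin k → Fin d × Bool =>
      ∀ j, 1 ≤ j → j ≤ k → posAt d x w j ≠ y)).card : ℝ) / (2 * (d : ℝ)) ^ k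

/-- `γ_d = ℙ_0(τ_0 = ∞)`: the probability that the simple random walk started at `0`
never returns to `0`. -/
noncomputable def gamma (d : ℕ) : ℝ := 1 - ∑' k : ℕ, firstHitProb d 0 0 (k + 1)

/-- `E_x[𝟙_{τ_y < ∞} (1 + u)^{-τ_y}]` for the simple random walk started at `x`. -/
noncomputable def hitGen (d : ℕ) (x y : Fin d → ℤ) (u : ℝ) : ℝ :=
  ∑' k : ℕ, firstHitProb d x y (k + 1) * ((1 + u) ^ (k + 1))⁻¹

/-- `ν` satisfies the balance equation with parameter `ε`:
`(1 + ε ν 0) ν x = (1/(2d)) ∑ i (ν (x + e i) + ν (x - e i))` for all `x ≠ 0`. -/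
def BalanceEq (d : ℕ) (ε : ℝ) (ν : (Fin d → ℤ) → ℝ) : Prop :=
  ∀ x : Fin d → ℤ, x ≠ 0 →
    (1 + ε * ν 0) * ν x =
      (1 / (2 * (d : ℝ))) * ∑ i : Fin d, (ν (x + e d i) + ν (x - e d i))

/-- `ν` is a probability measure on `ℤ^d`, identified with a nonnegative function
summing to `1`. -/
def IsProbMeasure (d : ℕ) (ν : (Fin d → ℤ) → ℝ) : Prop :=
  (∀ x, 0 ≤ ν x) ∧ HasSum ν 1

end CBRW

namespace CBRW

lemma posAt_cons (d : ℕ) {k : ℕ} (x : Fin d → ℤ) (s : Fin d × Bool) (w : Fin k → Fin d × Bool)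
    (j : ℕ) : posAt d x (Fin.cons s w : Fin (k + 1) → Fin d × Bool) (j + 1) =
      posAt d (x + dir d s) w j := by
  unfold posAt
  rw [Fin.sum_univ_succ]
  simp [add_assoc]

lemma posAt_zero (d : ℕ) {k : ℕ} (x : Fin d → ℤ) (w : Fin k → Fin d × Bool) :
    posAt d x w 0 = x := by
  simp [posAt]

lemma avoid_cons_iff (d : ℕ) {k : ℕ} (x : Fin d → ℤ) (s : Fin d × Bool)
    (w : Fin k → Fin d × Bool) :
    (∀ j, 1 ≤ j → j ≤ k + 1 →
      posAt d x (Fin.cons s w : Fin (k + 1) → Fin d × Bool) j ≠ 0) ↔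
    (x + dir d s ≠ 0 ∧ ∀ j, 1 ≤ j → j ≤ k → posAt d (x + dir d s) w j ≠ 0) := by
  constructor
  · intro h
    refine ⟨?_, ?_⟩
    · have := h 1 le_rfl (by omega)
      have h2 := posAt_cons d x s w 0
      rw [posAt_zero] at h2
      rw [← h2]
      exact this
    · intro j h1 h2
      have := h (j + 1) (by omega) (by omega)
      rwa [posAt_cons] at this
  · rintro ⟨h0, h⟩ j h1 h2
    obtain ⟨i, rfl⟩ : ∃ i, j = i + 1 := ⟨j - 1, by omega⟩
    rw [posAt_cons]
    rcases Nat.eq_zero_or_pos i with rfl | hi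
    · rwa [posAt_zero]
    · exact h i hi (by omega)

open Classical in
lemma avoidProb_succ (d : ℕ) (x : Fin d → ℤ) (k : ℕ) :
    avoidProb d x 0 (k + 1) = (1 / (2 * (d : ℝ))) *
      ∑ s : Fin d × Bool, if x + dir d s = 0 then 0 else avoidProb d (x + dir d s) 0 k := by
  have key : ((Finset.univ.filter (fun w : Fin (k + 1) → Fin d × Bool =>
      ∀ j, 1 ≤ j → j ≤ k + 1 → posAt d x w j ≠ 0)).card : ℝ) =
      ∑ s : Fin d × Bool, if x + dir d s = 0 then 0 else
        ((Finset.univ.filter (fun w : Fin k → Fin d × Bool =>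
      ∀ j, 1 ≤ j → j ≤ k → posAt d (x + dir d s) w j ≠ 0)).card : ℝ) := by
    simp only [Finset.card_filter, Nat.cast_sum]
    rw [← (Fin.consEquiv (fun _ : Fin (k + 1) => Fin d × Bool)).sum_comp, Fintype.sum_prod_type]
    refine Finset.sum_congr rfl fun s _ => ?_
    have : ∀ w : Fin k → Fin d × Bool,
      (Fin.consEquiv (fun _ : Fin (k + 1) => Fin d × Bool)) (s, w) = Fin.cons s w := fun _ => rfl
    simp only [this, avoid_cons_iff]
    split_ifs with h
    · simp [h]
    · simp [h]
  unfold avoidProb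
  rw [key, Finset.mul_sum, Finset.sum_div]
  refine Finset.sum_congr rfl fun s _ => ?_
  split_ifs
  · simp
  · rw [pow_succ, one_div, div_eq_mul_inv, div_eq_mul_inv, mul_inv]; ring

open Classical in
lemma avoidProb_zero (d : ℕ) (x : Fin d → ℤ) : avoidProb d x 0 0 = 1 := by
  unfold avoidProb
  have : ∀ w : Fin 0 → Fin d × Bool, ∀ j, 1 ≤ j → j ≤ 0 → posAt d x w j ≠ 0 := by
    intro w j h1 h2; omega
  simp only [Finset.card_filter, if_pos (this _)]
  simp

lemma avoidProb_nonneg (d : ℕ) (x y : Fin d → ℤ) (k : ℕ) : 0 ≤ avoidProb d x y k := by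
  unfold avoidProb; positivity

open Classical in
lemma avoidProb_le_one (d : ℕ) (x y : Fin d → ℤ) (k : ℕ) : avoidProb d x y k ≤ 1 := by
  unfold avoidProb
  apply div_le_one_of_le₀ _ (by positivity)
  have h : ∀ s : Finset (Fin k → Fin d × Bool), (s.card : ℝ) ≤ (2 * (d : ℝ)) ^ k := by
    intro s
    refine (Nat.cast_le.2 (Finset.card_le_univ s)).trans ?_
    simp [mul_comm]
  exact h _

lemma sum_dir (d : ℕ) (ν : (Fin d → ℤ) → ℝ) (x : Fin d → ℤ) :
    ∑ s : Fin d × Bool, ν (x - dir d s) = ∑ i : Fin d, (ν (x + e d i) + ν (x - e d i)) := by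
  rw [Fintype.sum_prod_type]
  refine Finset.sum_congr rfl fun i _ => ?_
  simp [dir, add_comm]

open Classical in
lemma step (d : ℕ) (ε : ℝ) (ν : (Fin d → ℤ) → ℝ)
    (hν : IsProbMeasure d ν) (hbal : BalanceEq d ε ν) (n : ℕ) :
    ∑' x, ν x * avoidProb d x 0 (n + 1) =
      (1 + ε * ν 0) * (∑' x, ν x * avoidProb d x 0 n - ν 0 * avoidProb d 0 0 n) := by
  obtain ⟨h0, h1⟩ := hν
  set g : (Fin d → ℤ) → ℝ := fun y => if y = 0 then 0 else avoidProb d y 0 n with hg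
  have hg0 : ∀ y, 0 ≤ g y := fun y => by
    simp only [hg]; split_ifs
    · exact le_rfl
    · exact avoidProb_nonneg _ _ _ _
  have hg1 : ∀ y, g y ≤ 1 := fun y => by
    simp only [hg]; split_ifs
    · exact zero_le_one
    · exact avoidProb_le_one _ _ _ _
  have hs1 : ∀ s, Summable fun x => ν x * g (x + dir d s) := fun s =>
    Summable.of_nonneg_of_le (fun x => mul_nonneg (h0 x) (hg0 _))
      (fun x => mul_le_of_le_one_right (h0 x) (hg1 _)) h1.summable
  have hshift : ∀ s, HasSum (fun y => ν (y - dir d s) * g y) (∑' x, ν x * g (x + dir d s)) := by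
    intro s
    have := (hs1 s).hasSum
    rw [← (Equiv.addRight (-dir d s)).hasSum_iff] at this
    convert this using 2 with y
    simp [sub_eq_add_neg]
  have hA : HasSum (fun x => ν x * avoidProb d x 0 (n + 1))
      ((1 / (2 * (d : ℝ))) * ∑ s, ∑' x, ν x * g (x + dir d s)) := by
    have := (hasSum_sum (s := Finset.univ) fun s _ => (hs1 s).hasSum).mul_left (1 / (2 * (d : ℝ)))
    refine Eq.mp (congrArg (fun f => HasSum f _) (funext fun x => ?_)) this
    symm
    rw [avoidProb_succ, ← Finset.mul_sum]
    simp only [hg]; ring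
  have hB : HasSum (fun y => (1 + ε * ν 0) * (ν y * g y))
      ((1 / (2 * (d : ℝ))) * ∑ s, ∑' x, ν x * g (x + dir d s)) := by
    have := (hasSum_sum (s := Finset.univ) fun s _ => hshift s).mul_left (1 / (2 * (d : ℝ)))
    refine Eq.mp (congrArg (fun f => HasSum f _) (funext fun y => ?_)) this
    symm
    rw [← Finset.sum_mul, sum_dir, ← mul_assoc, ← mul_assoc]
    by_cases hy : y = 0
    · simp [hg, hy]
    · rw [hbal y hy]
  rw [hA.tsum_eq, ← hB.tsum_eq, tsum_mul_left]
  congr 1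
  have hs2 : Summable fun x => ν x * avoidProb d x 0 n :=
    Summable.of_nonneg_of_le (fun x => mul_nonneg (h0 x) (avoidProb_nonneg _ _ _ _))
      (fun x => mul_le_of_le_one_right (h0 x) (avoidProb_le_one _ _ _ _)) h1.summable
  rw [hs2.tsum_eq_add_tsum_ite 0, add_sub_cancel_left]
  refine tsum_congr fun y => ?_
  simp only [hg]; split_ifs <;> simp

lemma nu_zero_pos (d : ℕ) (hd : 1 ≤ d) (ε : ℝ) (ν : (Fin d → ℤ) → ℝ)
    (hν : IsProbMeasure d ν) (hbal : BalanceEq d ε ν) : 0 < ν 0 := by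
  obtain ⟨h0, h1⟩ := hν
  by_contra hcon
  have hz : ν 0 = 0 := le_antisymm (not_lt.1 hcon) (h0 0)
  have hdR : (0 : ℝ) < d := by exact_mod_cast hd
  obtain ⟨a, ha⟩ : ∃ a, 0 < ν a := by
    by_contra h
    push Not at h
    have : ν = 0 := funext fun x => le_antisymm (h x) (h0 x)
    rw [this] at h1
    exact zero_ne_one (hasSum_zero.unique h1)
  have hfin : ∀ c, 0 < c → {x | c ≤ ν x}.Finite := by
    intro c hc
    have := h1.summable.tendsto_cofinite_zero.eventually (gt_mem_nhds hc)
    simpa [Filter.eventually_cofinite] using this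
  obtain ⟨m, hm, hmax⟩ := Set.exists_max_image _ ν (hfin _ ha) ⟨a, le_refl (ν a)⟩
  have hmax' : ∀ x, ν x ≤ ν m := fun x => by
    by_cases hx : ν a ≤ ν x
    · exact hmax x hx
    · exact (not_le.1 hx).le.trans hm
  have hmpos : 0 < ν m := ha.trans_le hm
  let i0 : Fin d := ⟨0, hd⟩
  have hstep : ∀ x, ν x = ν m → ν (x + e d i0) = ν m := by
    intro x hx
    have hx0 : x ≠ 0 := by rintro rfl; linarith
    have hb := hbal x hx0
    rw [hz, mul_zero, add_zero, one_mul, hx] at hb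
    by_contra hne
    have hlt : ν (x + e d i0) < ν m := lt_of_le_of_ne (hmax' _) hne
    have : ∑ i : Fin d, (ν (x + e d i) + ν (x - e d i)) < ∑ i : Fin d, (ν m + ν m) :=
      Finset.sum_lt_sum (fun i _ => add_le_add (hmax' _) (hmax' _))
        ⟨i0, Finset.mem_univ _, add_lt_add_of_lt_of_le hlt (hmax' _)⟩
    simp only [Finset.sum_const, Finset.card_univ, Fintype.card_fin, nsmul_eq_mul] at this
    rw [one_div, ← div_eq_inv_mul, eq_div_iff (by positivity)] at hb
    linarith
  have hall : ∀ k : ℕ, ν (m + k • e d i0) = ν m := by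
    intro k
    induction k with
    | zero => simp
    | succ k ih => rw [succ_nsmul, ← add_assoc]; exact hstep _ ih
  refine Set.infinite_of_injective_forall_mem (f := fun k : ℕ => m + k • e d i0) ?_ ?_
    (hfin _ hmpos)
  · intro k l hkl
    have := congrFun (add_left_cancel hkl) i0
    simpa [e] using this
  · intro k; exact (hall k).ge

end CBRW

open CBRW in
/-- For any probability measure `ν` satisfying the balance equation with parameter `ε > 0`,
`1 = ν 0 + ν 0 ∑_{k=1}^∞ (1 + ε ν 0)^{-k} ℙ_0(τ_0 ≥ k + 1)`. -/
theorem balance_probability_measure_sum_identity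
    (d : ℕ) (hd : 1 ≤ d) (ε : ℝ) (hε : 0 < ε) (ν : (Fin d → ℤ) → ℝ)
    (hν : IsProbMeasure d ν) (hbal : BalanceEq d ε ν) :
    1 = ν 0 + ν 0 * ∑' k : ℕ, ((1 + ε * ν 0) ^ (k + 1))⁻¹ * avoidProb d 0 0 (k + 1) := by
  have hpos := nu_zero_pos d hd ε ν hν hbal
  have hst := step d ε ν hν hbal
  obtain ⟨h0, h1⟩ := hν
  have hu : 1 < 1 + ε * ν 0 := by nlinarith [mul_pos hε hpos]
  set q := 1 + ε * ν 0 with hq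
  have hq0 : 0 < q := by linarith
  set F : ℕ → ℝ := fun n => ∑' x, ν x * avoidProb d x 0 n with hF
  have hF0 : F 0 = 1 := by simp [hF, avoidProb_zero, h1.tsum_eq]
  have hFn : ∀ n, 0 ≤ F n := fun n =>
    tsum_nonneg fun x => mul_nonneg (h0 x) (avoidProb_nonneg _ _ _ _)
  have hF1 : ∀ n, F n ≤ 1 := fun n => by
    rw [← h1.tsum_eq]
    have hle : ∀ x, ν x * avoidProb d x 0 n ≤ ν x := fun x =>
      mul_le_of_le_one_right (h0 x) (avoidProb_le_one _ _ _ _)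
    exact Summable.tsum_le_tsum hle (Summable.of_nonneg_of_le
      (fun x => mul_nonneg (h0 x) (avoidProb_nonneg _ _ _ _)) hle h1.summable) h1.summable
  have hpart : ∀ n, ∑ k ∈ Finset.range n, ν 0 * ((q ^ k)⁻¹ * avoidProb d 0 0 k)
      = 1 - (q ^ n)⁻¹ * F n := by
    intro n
    induction n with
    | zero => simp [hF0]
    | succ n ih =>
      have := hst n
      change F (n + 1) = q * (F n - _) at this
      rw [Finset.sum_range_succ, ih, this, pow_succ]
      field_simp
      ring
  have hlim : Filter.Tendsto (fun n => (q ^ n)⁻¹ * F n) Filter.atTop (nhds 0) := by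
    refine squeeze_zero (g := fun n => (q⁻¹) ^ n)
      (fun n => mul_nonneg (by positivity) (hFn n)) (fun n => ?_)
      (tendsto_pow_atTop_nhds_zero_of_lt_one (by positivity) (inv_lt_one_of_one_lt₀ hu))
    rw [inv_pow]
    exact mul_le_of_le_one_right (by positivity) (hF1 n)
  have hsum : HasSum (fun k => ν 0 * ((q ^ k)⁻¹ * avoidProb d 0 0 k)) 1 := by
    rw [hasSum_iff_tendsto_nat_of_nonneg]
    · simp only [hpart]
      simpa using hlim.const_sub 1
    · intro k
      exact mul_nonneg hpos.le (mul_nonneg (by positivity) (avoidProb_nonneg _ _ _ _))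
  have := hsum.summable.tsum_eq_zero_add
  rw [hsum.tsum_eq, tsum_mul_left] at this
  simpa [avoidProb_zero] using this
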